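/- Let E = {p_1⋯p_{j−1} p̌_j p_{j+1}⋯p_k : k ≥ 2, 1 ≤ j ≤ k} and Φ(x) = x ln(1+x)/ln ln(3+x). There exists an absolute constant c > 0 such that for every f ∈ L^Φ(𝕋) and every λ > 0, |{x ∈ 𝕋 : sup_{n∈E} |R_n f(x)| > λ}| ≤ ∫_𝕋 Φ(c|f(t)|/λ) dt. -/

import Mathlib

open MeasureTheory Filter Set

/-- The circle `𝕋 = ℝ/ℤ` with its Lebesgue (Haar) probability measure. -/
abbrev Circle1 := AddCircle (1 : ℝ)

/-- The Riemann sum operator `R_n f(x) = (1/n) ∑_{k=0}^{n-1} f(x + k/n)`. -/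
noncomputable def RiemannSum (n : ℕ) (f : Circle1 → ℝ) (x : Circle1) : ℝ :=
  (n : ℝ)⁻¹ * ∑ k ∈ Finset.range n, f (x + (((k : ℝ) / (n : ℝ) : ℝ) : Circle1))

/-- `nthPrime k` is the `(k+1)`-st prime: `nthPrime 0 = 2 = p_1`, … -/
noncomputable def nthPrime (k : ℕ) : ℕ := Nat.nth Nat.Prime k

/-- The set `E = {p_1 ⋯ p_{j-1} p̌_j p_{j+1} ⋯ p_k : k ≥ 2, 1 ≤ j ≤ k}`: all products of
the first `k` primes (`k ≥ 2`) with exactly one factor omitted. -/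
noncomputable def Eset : Set ℕ :=
  {m | ∃ k : ℕ, 2 ≤ k ∧ ∃ j < k, m = ∏ i ∈ Finset.range k \ {j}, nthPrime i}

/-- `Φ(x) = x ln(1+x) / ln ln(3+x)`. -/
noncomputable def PhiE (x : ℝ) : ℝ := x * Real.log (1 + x) / Real.log (Real.log (3 + x))


/-! ### Averaging sums -/

noncomputable def Sm {M : Type*} [AddCommMonoid M] (n : ℕ) (f : Circle1 → M) (x : Circle1) : M :=
  ∑ k ∈ Finset.range n, f (x + (((k : ℝ) / (n : ℝ) : ℝ) : Circle1))

def PerInv {M : Type*} (n : ℕ) (f : Circle1 → M) : Prop :=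
  ∀ (x : Circle1) (k : ℕ), f (x + (((k : ℝ) / (n : ℝ) : ℝ) : Circle1)) = f x

lemma coe_nat_circle (k : ℕ) : (((k : ℝ)) : Circle1) = 0 := by
  have := AddCircle.coe_eq_zero_iff (p := (1 : ℝ)) (x := (k : ℝ))
  rw [this]
  exact ⟨k, by simp⟩

lemma Sm_inv {M : Type*} [AddCommMonoid M] (n : ℕ) (hn : n ≠ 0) (f : Circle1 → M) :
    PerInv n (Sm n f) := by
  have hn' : (n : ℝ) ≠ 0 := by exact_mod_cast hn
  have h1 : ∀ x : Circle1, Sm n f (x + ((1 / (n : ℝ) : ℝ) : Circle1)) = Sm n f x := by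
    intro x
    unfold Sm
    have e1 : ∀ k : ℕ, f (x + ((1 / (n : ℝ) : ℝ) : Circle1) + (((k : ℝ) / (n : ℝ) : ℝ) : Circle1))
        = f (x + ((((k + 1 : ℕ) : ℝ) / (n : ℝ) : ℝ) : Circle1)) := by
      intro k
      congr 1
      rw [add_assoc, ← AddCircle.coe_add]
      congr 2
      push_cast
      ring
    simp_rw [e1]
    obtain ⟨m, rfl⟩ := Nat.exists_eq_succ_of_ne_zero hn
    rw [Finset.sum_range_succ, Finset.sum_range_succ']
    congr 1
    rw [div_self (by exact_mod_cast hn)]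
    have := coe_nat_circle 1
    have h0 := coe_nat_circle 0
    simp only [Nat.cast_one, Nat.cast_zero] at this h0
    simp [this]
  intro x k
  induction k with
  | zero => simp
  | succ k ih =>
    rw [← ih, ← h1 (x + (((k : ℝ) / (n : ℝ) : ℝ) : Circle1))]
    congr 1
    rw [add_assoc, ← AddCircle.coe_add]
    congr 2
    push_cast
    ring

lemma PerInv.of_dvd {M : Type*} {m n : ℕ} {f : Circle1 → M} (h : PerInv n f) (hn : n ≠ 0)
    (hd : m ∣ n) : PerInv m f := by
  obtain ⟨d, rfl⟩ := hd
  intro x k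
  have hm : (m : ℝ) ≠ 0 := by exact_mod_cast (left_ne_zero_of_mul hn)
  have hd : (d : ℝ) ≠ 0 := by exact_mod_cast (right_ne_zero_of_mul hn)
  rw [← h x (k * d)]
  congr 3
  push_cast
  field_simp

lemma Sm_comp {M : Type*} [AddCommMonoid M] {m n : ℕ} (hm : m ≠ 0) (hn : n ≠ 0)
    (hc : Nat.Coprime m n) (f : Circle1 → M) (x : Circle1) :
    Sm m (Sm n f) x = Sm (m * n) f x := by
  have hm' : (m : ℝ) ≠ 0 := by exact_mod_cast hm
  have hn' : (n : ℝ) ≠ 0 := by exact_mod_cast hn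
  have hmn : 0 < m * n := Nat.pos_of_ne_zero (mul_ne_zero hm hn)
  unfold Sm
  rw [← Finset.sum_product']
  let e : ℕ × ℕ → ℕ := fun q => (q.1 * n + q.2 * m) % (m * n)
  have hinj : Set.InjOn e (Finset.range m ×ˢ Finset.range n : Finset (ℕ × ℕ)) := by
    rintro ⟨a, b⟩ hab ⟨a', b'⟩ hab' h
    simp only [Finset.coe_product, Finset.coe_range, Set.mem_prod, Set.mem_Iio] at hab hab'
    have h' : a * n + b * m ≡ a' * n + b' * m [MOD m * n] := h
    have h1 : a * n ≡ a' * n [MOD m] := by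
      have := h'.of_mul_right n
      unfold Nat.ModEq at this ⊢
      simpa using this
    have h2 : b * m ≡ b' * m [MOD n] := by
      have := h'.of_mul_left m
      unfold Nat.ModEq at this ⊢
      simpa using this
    have h3 : a ≡ a' [MOD m] := Nat.ModEq.cancel_right_of_coprime hc h1
    have h4 : b ≡ b' [MOD n] := Nat.ModEq.cancel_right_of_coprime hc.symm h2
    rw [Prod.mk.injEq]
    exact ⟨h3.eq_of_lt_of_lt hab.1 hab'.1, h4.eq_of_lt_of_lt hab.2 hab'.2⟩
  have him : (Finset.range m ×ˢ Finset.range n).image e = Finset.range (m * n) := by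
    apply Finset.eq_of_subset_of_card_le
    · intro c hc
      obtain ⟨q, -, rfl⟩ := Finset.mem_image.1 hc
      exact Finset.mem_range.2 (Nat.mod_lt _ hmn)
    · rw [Finset.card_image_of_injOn hinj]; simp
  rw [← him, Finset.sum_image hinj]
  apply Finset.sum_congr rfl
  rintro ⟨a, b⟩ -
  congr 1
  rw [add_assoc, ← AddCircle.coe_add]
  congr 1
  have hk : ((((a * n + b * m) / (m * n) : ℕ) : ℝ) : Circle1) = 0 := coe_nat_circle _
  rw [← add_zero ((((e (a, b) : ℕ) : ℝ) / ((m * n : ℕ) : ℝ) : ℝ) : Circle1), ← hk,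
    ← AddCircle.coe_add]
  congr 1
  have := Nat.mod_add_div (a * n + b * m) (m * n)
  have h2 : (((a * n + b * m) % (m * n) : ℕ) : ℝ) + (m * n) * (((a * n + b * m) / (m * n) : ℕ) : ℝ)
      = a * n + b * m := by exact_mod_cast this
  simp only [e]
  push_cast
  field_simp
  linarith

/-! ### Extended averages -/

noncomputable def Av (n : ℕ) (f : Circle1 → ENNReal) (x : Circle1) : ENNReal :=
  (n : ENNReal)⁻¹ * Sm n f x

lemma meas_shift {M : Type*} [MeasurableSpace M] {f : Circle1 → M} (hf : Measurable f)
    (c : Circle1) : Measurable fun x => f (x + c) := hf.comp (measurable_add_const c)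

lemma Av_meas (n : ℕ) {f : Circle1 → ENNReal} (hf : Measurable f) : Measurable (Av n f) := by
  unfold Av Sm
  apply Measurable.const_mul
  exact Finset.measurable_sum _ fun k _ => meas_shift hf _

lemma RS_meas (n : ℕ) {f : Circle1 → ℝ} (hf : Measurable f) : Measurable (RiemannSum n f) := by
  unfold RiemannSum
  apply Measurable.const_mul
  exact Finset.measurable_sum _ fun k _ => meas_shift hf _

lemma RS_eq (n : ℕ) (f : Circle1 → ℝ) (x : Circle1) : RiemannSum n f x = (n : ℝ)⁻¹ * Sm n f x := rfl

lemma Av_inv (n : ℕ) (hn : n ≠ 0) (f : Circle1 → ENNReal) : PerInv n (Av n f) := by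
  intro x k
  unfold Av
  rw [Sm_inv n hn f x k]

lemma RS_inv (n : ℕ) (hn : n ≠ 0) (f : Circle1 → ℝ) : PerInv n (RiemannSum n f) := by
  intro x k
  rw [RS_eq, RS_eq, Sm_inv n hn f x k]

lemma Sm_const_mul {M : Type*} [Semiring M] (n : ℕ) (c : M) (f : Circle1 → M) (x : Circle1) :
    Sm n (fun y => c * f y) x = c * Sm n f x := by
  unfold Sm
  rw [Finset.mul_sum]

lemma Av_comp {m n : ℕ} (hm : m ≠ 0) (hn : n ≠ 0)
    (hc : Nat.Coprime m n) (f : Circle1 → ENNReal) (x : Circle1) :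
    Av m (Av n f) x = Av (m * n) f x := by
  have : Av n f = fun y => (n : ENNReal)⁻¹ * Sm n f y := rfl
  rw [this]
  unfold Av
  rw [Sm_const_mul, Sm_comp hm hn hc, ← mul_assoc]
  congr 1
  push_cast
  rw [ENNReal.mul_inv (by left; exact_mod_cast hm) (by left; simp)]

lemma RS_comp {m n : ℕ} (hm : m ≠ 0) (hn : n ≠ 0)
    (hc : Nat.Coprime m n) (f : Circle1 → ℝ) (x : Circle1) :
    RiemannSum m (RiemannSum n f) x = RiemannSum (m * n) f x := by
  have : RiemannSum n f = fun y => (n : ℝ)⁻¹ * Sm n f y := rfl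
  rw [this, RS_eq, Sm_const_mul, Sm_comp hm hn hc, ← mul_assoc, RS_eq]
  congr 1
  push_cast
  rw [mul_inv]

lemma Av_mul_inv {n : ℕ} {φ : Circle1 → ENNReal} (h : PerInv n φ) (f : Circle1 → ENNReal)
    (x : Circle1) : Av n (fun y => φ y * f y) x = φ x * Av n f x := by
  unfold Av Sm
  simp_rw [h x]
  rw [← Finset.mul_sum]
  ring

lemma RS_mul_inv {n : ℕ} {φ : Circle1 → ℝ} (h : PerInv n φ) (f : Circle1 → ℝ)
    (x : Circle1) : RiemannSum n (fun y => φ y * f y) x = φ x * RiemannSum n f x := by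
  unfold RiemannSum
  simp_rw [h x]
  rw [← Finset.mul_sum]
  ring

lemma Av_lintegral {n : ℕ} (hn : n ≠ 0) {f : Circle1 → ENNReal} (hf : Measurable f) :
    ∫⁻ x, Av n f x = ∫⁻ x, f x := by
  unfold Av Sm
  rw [lintegral_const_mul _ (Finset.measurable_sum _ fun k _ => meas_shift hf _),
    lintegral_finsetSum _ fun k _ => meas_shift hf _]
  simp_rw [lintegral_add_right_eq_self (μ := (volume : Measure Circle1)) f]
  simp only [Finset.sum_const, Finset.card_range, nsmul_eq_mul]
  rw [← mul_assoc, ENNReal.inv_mul_cancel (by exact_mod_cast hn) (by simp), one_mul]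

lemma RS_integral {n : ℕ} (hn : n ≠ 0) {f : Circle1 → ℝ} (hf : Integrable f) :
    ∫ x, RiemannSum n f x = ∫ x, f x := by
  unfold RiemannSum
  rw [integral_const_mul, integral_finsetSum _ fun k _ => hf.comp_add_right _]
  simp_rw [integral_add_right_eq_self (μ := (volume : Measure Circle1)) f]
  simp only [Finset.sum_const, Finset.card_range, nsmul_eq_mul]
  rw [← mul_assoc, inv_mul_cancel₀ (by exact_mod_cast hn), one_mul]

lemma Av_mono {n : ℕ} {f g : Circle1 → ENNReal} (h : ∀ x, f x ≤ g x) (x : Circle1) :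
    Av n f x ≤ Av n g x := by
  unfold Av Sm
  gcongr with k _
  exact h _

lemma Av_add {n : ℕ} (f g : Circle1 → ENNReal) (x : Circle1) :
    Av n (fun y => f y + g y) x = Av n f x + Av n g x := by
  unfold Av Sm
  rw [Finset.sum_add_distrib, mul_add]

lemma Av_const {n : ℕ} (hn : n ≠ 0) (c : ENNReal) (x : Circle1) :
    Av n (fun _ => c) x = c := by
  unfold Av Sm
  simp only [Finset.sum_const, Finset.card_range, nsmul_eq_mul]
  rw [← mul_assoc, ENNReal.inv_mul_cancel (by exact_mod_cast hn) (by simp), one_mul]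

lemma Av_tsum {n : ℕ} (f : ℕ → Circle1 → ENNReal) (x : Circle1) :
    Av n (fun y => ∑' s, f s y) x = ∑' s, Av n (f s) x := by
  unfold Av Sm
  rw [ENNReal.tsum_mul_left]
  congr 1
  rw [Summable.tsum_finsetSum fun _ _ => ENNReal.summable]

lemma Av_const_mul {n : ℕ} (c : ENNReal) (f : Circle1 → ENNReal) (x : Circle1) :
    Av n (fun y => c * f y) x = c * Av n f x := by
  unfold Av
  rw [Sm_const_mul]
  ring

lemma Av_ofReal {n : ℕ} (hn : n ≠ 0) (f : Circle1 → ℝ) (hf : ∀ x, 0 ≤ f x) (x : Circle1) :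
    Av n (fun y => ENNReal.ofReal (f y)) x = ENNReal.ofReal (RiemannSum n f x) := by
  unfold Av RiemannSum Sm
  rw [ENNReal.ofReal_mul (by positivity), ENNReal.ofReal_sum_of_nonneg (fun _ _ => hf _),
    ENNReal.ofReal_inv_of_pos (by positivity), ENNReal.ofReal_natCast]

lemma RS_abs_le (n : ℕ) (f : Circle1 → ℝ) (x : Circle1) :
    |RiemannSum n f x| ≤ RiemannSum n (fun y => |f y|) x := by
  unfold RiemannSum
  rw [abs_mul, abs_of_nonneg (by positivity : (0 : ℝ) ≤ (n : ℝ)⁻¹)]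
  gcongr
  exact Finset.abs_sum_le_sum_abs _ _

lemma RS_nonneg (n : ℕ) {f : Circle1 → ℝ} (hf : ∀ x, 0 ≤ f x) (x : Circle1) :
    0 ≤ RiemannSum n f x := by
  unfold RiemannSum
  exact mul_nonneg (by positivity) (Finset.sum_nonneg fun _ _ => hf _)

lemma RS_le {n : ℕ} (hn : n ≠ 0) {f : Circle1 → ℝ} {M : ℝ} (hf : ∀ x, f x ≤ M) (x : Circle1) :
    RiemannSum n f x ≤ M := by
  unfold RiemannSum
  calc _ ≤ (n : ℝ)⁻¹ * ∑ k ∈ Finset.range n, M := by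
        gcongr
        exact hf _
    _ = M := by
        simp only [Finset.sum_const, Finset.card_range, nsmul_eq_mul]
        rw [← mul_assoc, inv_mul_cancel₀ (by exact_mod_cast hn), one_mul]

/-! ### Maximal inequality for a divisibility chain -/

lemma max_fin (N : ℕ → ℕ) (hN : ∀ i, N i ≠ 0) (hd : ∀ i j, i ≤ j → N i ∣ N j) (L : ℕ) :
    ∀ G : Circle1 → ENNReal, Measurable G →
      volume {x : Circle1 | ∃ l < L, 1 < Av (N l) G x} ≤ ∫⁻ x, G x := by
  induction L with
  | zero => intro G _; simp
  | succ L ih =>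
    intro G hG
    set S : Set Circle1 := {x | 1 < Av (N L) G x} with hS
    have hSm : MeasurableSet S := measurableSet_lt measurable_const (Av_meas _ hG)
    have hinvS : ∀ l ≤ L, ∀ (x : Circle1) (k : ℕ),
        (x + (((k : ℝ) / ((N l : ℕ) : ℝ) : ℝ) : Circle1) ∈ S ↔ x ∈ S) := by
      intro l hl x k
      have := ((Av_inv (N L) (hN L) G).of_dvd (hN L) (hd l L hl)) x k
      simp only [hS, Set.mem_ofPred_eq, this]
    have hI1 : PerInv (N L) (S.indicator (fun _ => (1 : ENNReal))) := by
      intro x k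
      simp only [Set.indicator, hinvS L le_rfl x k]
    have hI2 : ∀ l ≤ L, PerInv (N l) (Sᶜ.indicator (fun _ => (1 : ENNReal))) := by
      intro l hl x k
      simp only [Set.indicator, Set.mem_compl_iff, hinvS l hl x k]
    have h1 : volume S ≤ ∫⁻ x in S, G x := by
      have e1 : ∫⁻ x in S, G x = ∫⁻ x in S, Av (N L) G x := by
        rw [← lintegral_indicator hSm, ← lintegral_indicator hSm]
        have e2 : ∀ H : Circle1 → ENNReal, S.indicator H
            = fun x => S.indicator (fun _ => (1 : ENNReal)) x * H x := by
          intro H; ext x; by_cases hx : x ∈ S <;> simp [hx]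
        rw [e2 G, e2 (Av (N L) G)]
        simp_rw [← Av_mul_inv hI1]
        rw [Av_lintegral (hN L)]
        exact (measurable_const.indicator hSm).mul hG
      rw [e1]
      calc volume S = ∫⁻ x in S, 1 := by simp
        _ ≤ _ := setLIntegral_mono (Av_meas _ hG) fun x hx => le_of_lt hx
    have h2 := ih (fun x => Sᶜ.indicator (fun _ => (1 : ENNReal)) x * G x)
      ((measurable_const.indicator hSm.compl).mul hG)
    have h3 : ∫⁻ x, Sᶜ.indicator (fun _ => (1 : ENNReal)) x * G x = ∫⁻ x in Sᶜ, G x := by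
      rw [← lintegral_indicator hSm.compl]
      congr 1
      ext x; by_cases hx : x ∈ S <;> simp [hx]
    rw [h3] at h2
    have hsub : {x : Circle1 | ∃ l < L + 1, 1 < Av (N l) G x} ⊆
        S ∪ {x : Circle1 | ∃ l < L, 1 < Av (N l)
          (fun x => Sᶜ.indicator (fun _ => (1 : ENNReal)) x * G x) x} := by
      rintro x ⟨l, hl, hx⟩
      by_cases hxS : x ∈ S
      · exact Or.inl hxS
      · right
        have hlL : l < L := by
          rcases Nat.lt_succ_iff_lt_or_eq.1 hl with h | h
          · exact h
          · subst h; exact absurd hx hxS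
        refine ⟨l, hlL, ?_⟩
        rw [Av_mul_inv (hI2 l hlL.le)]
        simpa [hxS] using hx
    calc _ ≤ _ := measure_mono hsub
      _ ≤ _ := measure_union_le _ _
      _ ≤ (∫⁻ x in S, G x) + ∫⁻ x in Sᶜ, G x := add_le_add h1 h2
      _ = _ := lintegral_add_compl _ hSm

lemma max_chain (N : ℕ → ℕ) (hN : ∀ i, N i ≠ 0) (hd : ∀ i j, i ≤ j → N i ∣ N j)
    (G : Circle1 → ENNReal) (hG : Measurable G) :
      volume {x : Circle1 | ∃ l, 1 < Av (N l) G x} ≤ ∫⁻ x, G x := by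
  have : {x : Circle1 | ∃ l, 1 < Av (N l) G x}
      = ⋃ L : ℕ, {x : Circle1 | ∃ l < L, 1 < Av (N l) G x} := by
    ext x
    simp only [Set.mem_ofPred_eq, Set.mem_iUnion]
    constructor
    · rintro ⟨l, h⟩; exact ⟨l + 1, l, by omega, h⟩
    · rintro ⟨_, l, _, h⟩; exact ⟨l, h⟩
  rw [this, Monotone.measure_iUnion]
  · exact iSup_le fun L => max_fin N hN hd L G hG
  · intro L L' h x
    rintro ⟨l, hl, hx⟩
    exact ⟨l, hl.trans_le h, hx⟩

/-! ### The scalar Bregman inequality -/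

lemma bregman (a t g μ : ℝ) (ha : 0 < a) (ht : 4 ≤ t) (hg : 0 ≤ g) (hμ : 0 ≤ μ) :
    t / 2 * (if Real.exp t * μ < g ∧ Real.exp t / a < g then g else 0)
      + (μ * Real.log (1 + a * μ)
        + (Real.log (1 + a * μ) + a * μ / (1 + a * μ)) * (g - μ)) ≤ g * Real.log (1 + a * g) := by
  have hp1 : 0 < 1 + a * μ := by positivity
  have hp2 : 0 < 1 + a * g := by positivity
  set L := Real.log (1 + a * μ) with hL
  split_ifs with h
  · obtain ⟨h1, h2⟩ := h
    have hr1 : a * μ / (1 + a * μ) ≤ 1 := by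
      rw [div_le_one hp1]; linarith
    have hr0 : 0 ≤ a * μ / (1 + a * μ) := by positivity
    have hE := Real.exp_pos t
    have hag : Real.exp t < a * g := by
      rw [div_lt_iff₀ ha] at h2; linarith
    have hlog : t - Real.log 2 + L ≤ Real.log (1 + a * g) := by
      have : t - Real.log 2 + L = Real.log (Real.exp t / 2 * (1 + a * μ)) := by
        rw [Real.log_mul (by positivity) hp1.ne', Real.log_div hE.ne' (by norm_num), Real.log_exp]
      rw [this]
      apply Real.log_le_log (by positivity)
      nlinarith
    have hl2 : Real.log 2 < 1 := by
      have := Real.log_two_lt_d9; linarith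
    have h3 : t / 2 + L + a * μ / (1 + a * μ) ≤ Real.log (1 + a * g) := by
      have := Real.log_two_lt_d9; linarith
    have := mul_le_mul_of_nonneg_left h3 hg
    nlinarith [mul_nonneg hr0 hμ]
  · have h1 : 1 - (1 + a * μ) / (1 + a * g) ≤ Real.log (1 + a * g) - L := by
      have := Real.one_sub_inv_le_log_of_pos (show 0 < (1 + a * g) / (1 + a * μ) by positivity)
      rwa [inv_div, Real.log_div hp2.ne' hp1.ne'] at this
    have h2 := mul_le_mul_of_nonneg_left h1 hg
    have h3 : 0 ≤ g * (1 - (1 + a * μ) / (1 + a * g)) - a * μ / (1 + a * μ) * (g - μ) := by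
      have : g * (1 - (1 + a * μ) / (1 + a * g)) - a * μ / (1 + a * μ) * (g - μ)
          = a * (g - μ) ^ 2 / ((1 + a * g) * (1 + a * μ)) := by
        field_simp
        ring
      rw [this]
      positivity
    nlinarith

/-! ### Primes -/

lemma nthPrime_prime (i : ℕ) : (nthPrime i).Prime := Nat.prime_nth_prime i

lemma nthPrime_inj : Function.Injective nthPrime :=
  Nat.nth_injective Nat.infinite_setOfPred_prime

lemma prodPrime_ne (s : Finset ℕ) : ∏ i ∈ s, nthPrime i ≠ 0 :=
  Finset.prod_ne_zero_iff.2 fun i _ => (nthPrime_prime i).ne_zero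

lemma prodPrime_coprime {s u : Finset ℕ} (h : Disjoint s u) :
    Nat.Coprime (∏ i ∈ s, nthPrime i) (∏ i ∈ u, nthPrime i) := by
  refine Nat.Coprime.prod_left fun i hi => Nat.Coprime.prod_right fun j hj => ?_
  rw [Nat.coprime_primes (nthPrime_prime i) (nthPrime_prime j)]
  intro he
  have := nthPrime_inj he
  subst this
  exact Finset.disjoint_left.1 h hi hj

noncomputable def NN (j : ℕ) : ℕ := ∏ i ∈ Finset.range j, nthPrime i

noncomputable def PP (j k : ℕ) : ℕ := ∏ i ∈ Finset.Ico (j + 1) k, nthPrime i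

lemma NN_ne (j : ℕ) : NN j ≠ 0 := prodPrime_ne _
lemma PP_ne (j k : ℕ) : PP j k ≠ 0 := prodPrime_ne _

lemma NN_succ (j : ℕ) : NN (j + 1) = nthPrime j * NN j := by
  unfold NN; rw [Finset.prod_range_succ, mul_comm]

lemma NN_dvd (i j : ℕ) (h : i ≤ j) : NN i ∣ NN j :=
  Finset.prod_dvd_prod_of_subset _ _ _ (Finset.range_mono h)

lemma PP_dvd (l i j : ℕ) (h : i ≤ j) : PP l i ∣ PP l j :=
  Finset.prod_dvd_prod_of_subset _ _ _ (Finset.Ico_subset_Ico le_rfl h)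

lemma cop1 (j : ℕ) : Nat.Coprime (nthPrime j) (NN j) := by
  have := prodPrime_coprime (s := {j}) (u := Finset.range j) (by simp)
  simpa [NN] using this

lemma cop2 (j k m : ℕ) (hm : m ≤ j + 1) : Nat.Coprime (PP j k) (NN m) := by
  apply prodPrime_coprime
  rw [Finset.disjoint_left]
  intro i hi hi'
  simp at hi hi'
  omega

lemma PP_mul_NN (j k : ℕ) (h : j < k) : PP j k * NN (j + 1) = NN k := by
  unfold PP NN
  rw [mul_comm, Finset.range_eq_Ico, Finset.range_eq_Ico,
    Finset.prod_Ico_consecutive _ (Nat.zero_le _) h]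

lemma PP_mul_NN' (j k : ℕ) (h : j < k) :
    PP j k * NN j = ∏ i ∈ Finset.range k \ {j}, nthPrime i := by
  unfold PP NN
  rw [← Finset.prod_union]
  · apply Finset.prod_congr _ fun _ _ => rfl
    ext i
    simp
    omega
  · rw [Finset.disjoint_left]
    intro i hi hi'
    simp at hi hi'
    omega

/-! ### The entropy estimate for one bounded layer -/

lemma bdd_int {f : Circle1 → ℝ} (hf : Measurable f) {M : ℝ} (h : ∀ x, |f x| ≤ M) :
    Integrable f :=
  Integrable.of_bound hf.aestronglyMeasurable M (Filter.Eventually.of_forall h)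

noncomputable def gg (F : Circle1 → ℝ) (j : ℕ) : Circle1 → ℝ := RiemannSum (NN j) F

noncomputable def bb (a t : ℝ) (F : Circle1 → ℝ) (j : ℕ) (x : Circle1) : ℝ :=
  if Real.exp t * gg F (j + 1) x < gg F j x ∧ Real.exp t / a < gg F j x then gg F j x else 0

lemma gg_meas {F : Circle1 → ℝ} (hF : Measurable F) (j : ℕ) : Measurable (gg F j) :=
  RS_meas _ hF

lemma bb_meas (a t : ℝ) {F : Circle1 → ℝ} (hF : Measurable F) (j : ℕ) :
    Measurable (bb a t F j) := by
  unfold bb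
  refine Measurable.ite ?_ (gg_meas hF j) measurable_const
  exact (measurableSet_lt ((gg_meas hF _).const_mul _) (gg_meas hF j)).inter
    (measurableSet_lt measurable_const (gg_meas hF j))

lemma gg_nonneg {F : Circle1 → ℝ} (hF : ∀ x, 0 ≤ F x) (j : ℕ) (x : Circle1) : 0 ≤ gg F j x :=
  RS_nonneg _ hF x

lemma bb_nonneg (a t : ℝ) {F : Circle1 → ℝ} (hF : ∀ x, 0 ≤ F x) (j : ℕ) (x : Circle1) :
    0 ≤ bb a t F j x := by
  unfold bb
  split_ifs
  · exact gg_nonneg hF _ _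
  · rfl

lemma gg_zero (F : Circle1 → ℝ) (x : Circle1) : gg F 0 x = F x := by
  simp [gg, NN, RiemannSum]

lemma layer_real (a t : ℝ) (ha : 0 < a) (ht : 4 ≤ t) {F : Circle1 → ℝ} (hF : Measurable F)
    (h0 : ∀ x, 0 ≤ F x) {M : ℝ} (hM : ∀ x, F x ≤ M) (J : ℕ) :
    ∑ j ∈ Finset.range J, ∫ x, bb a t F j x ≤
      ∫ x, (2 / t) * (F x * Real.log (1 + a * F x)) := by
  have ht0 : 0 < t := by linarith
  have hM0 : 0 ≤ M := (h0 0).trans (hM 0)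
  have hgM : ∀ j x, gg F j x ≤ M := fun j x => RS_le (NN_ne j) hM x
  have hg0 := gg_nonneg h0
  have hgm := gg_meas hF
  set ψ : ℝ → ℝ := fun u => u * Real.log (1 + a * u) with hψ
  set ψ' : ℝ → ℝ := fun u => Real.log (1 + a * u) + a * u / (1 + a * u) with hψ'
  have hψm : Measurable ψ := by fun_prop
  have hψm' : Measurable ψ' := by fun_prop
  have hlog : ∀ u, 0 ≤ u → u ≤ M → 0 ≤ Real.log (1 + a * u) ∧
      Real.log (1 + a * u) ≤ Real.log (1 + a * M) := by
    intro u hu huM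
    refine ⟨Real.log_nonneg (by nlinarith [mul_nonneg ha.le hu]), ?_⟩
    apply Real.log_le_log (by positivity)
    gcongr
  have hψb : ∀ j x, |ψ (gg F j x)| ≤ M * Real.log (1 + a * M) := by
    intro j x
    obtain ⟨l1, l2⟩ := hlog _ (hg0 j x) (hgM j x)
    simp only [hψ]
    rw [abs_of_nonneg (mul_nonneg (hg0 j x) l1)]
    exact mul_le_mul (hgM j x) l2 l1 hM0
  have hψb' : ∀ j x, |ψ' (gg F j x)| ≤ Real.log (1 + a * M) + 1 := by
    intro j x
    obtain ⟨l1, l2⟩ := hlog _ (hg0 j x) (hgM j x)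
    have hag := mul_nonneg ha.le (hg0 j x)
    simp only [hψ']
    rw [abs_of_nonneg (by positivity)]
    gcongr
    rw [div_le_one (by positivity)]
    linarith
  have hbM : ∀ j x, |bb a t F j x| ≤ M := by
    intro j x
    rw [abs_of_nonneg (bb_nonneg a t h0 j x)]
    unfold bb
    split_ifs
    · exact hgM j x
    · exact hM0
  have ib : ∀ j, Integrable (bb a t F j) := fun j => bdd_int (bb_meas a t hF j) (hbM j)
  have iψ : ∀ j, Integrable (fun x => ψ (gg F j x)) := fun j =>
    bdd_int (hψm.comp (hgm j)) (hψb j)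
  have ig : ∀ i j, Integrable (fun x => ψ' (gg F i x) * gg F j x) := by
    intro i j
    refine bdd_int ((hψm'.comp (hgm i)).mul (hgm j)) (M := (Real.log (1 + a * M) + 1) * M) ?_
    intro x
    rw [abs_mul]
    apply mul_le_mul (hψb' i x) _ (abs_nonneg _) ((abs_nonneg _).trans (hψb' i x))
    rw [abs_of_nonneg (hg0 j x)]
    exact hgM j x
  have key : ∀ j, t / 2 * ∫ x, bb a t F j x ≤
      (∫ x, ψ (gg F j x)) - ∫ x, ψ (gg F (j + 1) x) := by
    intro j
    have hinv : PerInv (nthPrime j) (fun x => ψ' (gg F (j + 1) x)) := by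
      have : PerInv (nthPrime j) (gg F (j + 1)) :=
        (RS_inv _ (NN_ne (j + 1)) F).of_dvd (NN_ne _) (by rw [NN_succ]; exact dvd_mul_right _ _)
      intro x k
      simp only [this x k]
    have hz : ∫ x, ψ' (gg F (j + 1) x) * gg F j x
        = ∫ x, ψ' (gg F (j + 1) x) * gg F (j + 1) x := by
      rw [← RS_integral (nthPrime_prime j).ne_zero (ig (j + 1) j)]
      congr 1
      ext x
      rw [RS_mul_inv hinv]
      congr 1
      unfold gg
      rw [RS_comp (nthPrime_prime j).ne_zero (NN_ne j) (cop1 j), NN_succ]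
    have hmono : ∫ x, (t / 2 * bb a t F j x + ψ (gg F (j + 1) x)
          + ψ' (gg F (j + 1) x) * gg F j x)
        ≤ ∫ x, (ψ (gg F j x) + ψ' (gg F (j + 1) x) * gg F (j + 1) x) := by
      apply integral_mono
      · exact (((ib j).const_mul _).add (iψ _)).add (ig _ _)
      · exact (iψ _).add (ig _ _)
      · intro x
        have := bregman a t (gg F j x) (gg F (j + 1) x) ha ht (hg0 _ _) (hg0 _ _)
        simp only [hψ, hψ', bb]
        linarith
    have i1 : Integrable (fun x => t / 2 * bb a t F j x + ψ (gg F (j + 1) x)) :=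
      ((ib j).const_mul _).add (iψ _)
    rw [integral_add i1 (ig _ _),
      integral_add ((ib j).const_mul _) (iψ _), integral_add (iψ _) (ig _ _),
      integral_const_mul, hz] at hmono
    linarith
  have hsum : t / 2 * ∑ j ∈ Finset.range J, ∫ x, bb a t F j x ≤
      (∫ x, ψ (gg F 0 x)) - ∫ x, ψ (gg F J x) := by
    rw [Finset.mul_sum, ← Finset.sum_range_sub' (fun j => ∫ x, ψ (gg F j x))]
    exact Finset.sum_le_sum fun j _ => key j
  have hpos : 0 ≤ ∫ x, ψ (gg F J x) := by
    apply integral_nonneg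
    intro x
    exact mul_nonneg (hg0 _ _) (hlog _ (hg0 J x) (hgM J x)).1
  rw [integral_const_mul]
  simp only [gg_zero] at hsum
  have h5 : t / 2 * ∑ j ∈ Finset.range J, ∫ x, bb a t F j x ≤ ∫ x, ψ (F x) := by linarith
  have h6 := mul_le_mul_of_nonneg_left h5 (show 0 ≤ 2 / t by positivity)
  rw [← mul_assoc, show 2 / t * (t / 2) = 1 by field_simp, one_mul] at h6
  exact h6

lemma layer_lint (a t : ℝ) (ha : 0 < a) (ht : 4 ≤ t) {F : Circle1 → ℝ} (hF : Measurable F)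
    (h0 : ∀ x, 0 ≤ F x) {M : ℝ} (hM : ∀ x, F x ≤ M) :
    ∑' j, ∫⁻ x, ENNReal.ofReal (bb a t F j x) ≤
      ∫⁻ x, ENNReal.ofReal ((2 / t) * (F x * Real.log (1 + a * F x))) := by
  have hM0 : 0 ≤ M := (h0 0).trans (hM 0)
  have hlog : ∀ x, 0 ≤ Real.log (1 + a * F x) := fun x =>
    Real.log_nonneg (by nlinarith [mul_nonneg ha.le (h0 x)])
  apply ENNReal.tsum_le_of_sum_range_le
  intro J
  have ib : ∀ j, Integrable (bb a t F j) := by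
    intro j
    refine bdd_int (bb_meas a t hF j) (M := M) fun x => ?_
    rw [abs_of_nonneg (bb_nonneg a t h0 j x)]
    unfold bb
    split_ifs
    · exact RS_le (NN_ne j) hM x
    · exact hM0
  have i2 : Integrable (fun x => (2 / t) * (F x * Real.log (1 + a * F x))) := by
    apply Integrable.const_mul
    refine bdd_int (by fun_prop) (M := M * Real.log (1 + a * M)) fun x => ?_
    rw [abs_of_nonneg (mul_nonneg (h0 x) (hlog x))]
    refine mul_le_mul (hM x) ?_ (hlog x) hM0
    apply Real.log_le_log (by have := mul_nonneg ha.le (h0 x); positivity)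
    gcongr
    exact hM x
  rw [← ofReal_integral_eq_lintegral_ofReal i2 (Filter.Eventually.of_forall fun x => by
    have := hlog x; have := h0 x; have : 0 < t := by linarith
    simp only [Pi.zero_apply]; positivity)]
  calc _ = ∑ j ∈ Finset.range J, ENNReal.ofReal (∫ x, bb a t F j x) := by
        apply Finset.sum_congr rfl
        intro j _
        rw [ofReal_integral_eq_lintegral_ofReal (ib j)
          (Filter.Eventually.of_forall fun x => bb_nonneg a t h0 j x)]
    _ = ENNReal.ofReal (∑ j ∈ Finset.range J, ∫ x, bb a t F j x) := by
        rw [ENNReal.ofReal_sum_of_nonneg]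
        exact fun j _ => integral_nonneg fun x => bb_nonneg a t h0 j x
    _ ≤ _ := ENNReal.ofReal_le_ofReal (layer_real a t ha ht hF h0 hM J)

/-! ### Layers -/

noncomputable def tt (s : ℕ) : ℝ := 2 ^ (s + 2)
noncomputable def aa (s : ℕ) : ℝ := Real.exp (Real.exp (2 * tt s))

noncomputable def Fs (F : Circle1 → ℝ) (s : ℕ) (x : Circle1) : ℝ :=
  if aa s ≤ F x ∧ F x < aa (s + 1) then F x else 0

lemma tt_succ (s : ℕ) : tt (s + 1) = 2 * tt s := by unfold tt; ring

lemma tt_four (s : ℕ) : 4 ≤ tt s := by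
  unfold tt
  rw [pow_add]
  have : (1 : ℝ) ≤ 2 ^ s := one_le_pow₀ (by norm_num)
  linarith

lemma aa_pos (s : ℕ) : 0 < aa s := Real.exp_pos _

lemma aa_mono : Monotone aa := by
  intro s u h
  unfold aa tt
  gcongr
  norm_num

lemma tt_le_aa (s : ℕ) : tt s ≤ aa s := by
  unfold aa
  have h1 := Real.add_one_le_exp (Real.exp (2 * tt s))
  have h2 := Real.add_one_le_exp (2 * tt s)
  have := tt_four s
  linarith

lemma nat_le_tt (s : ℕ) : (s : ℝ) < tt s := by
  unfold tt
  have : s < 2 ^ (s + 2) := (Nat.lt_two_pow_self).trans (Nat.pow_lt_pow_right (by norm_num) (by omega))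
  exact_mod_cast this

lemma Fs_meas {F : Circle1 → ℝ} (hF : Measurable F) (s : ℕ) : Measurable (Fs F s) := by
  unfold Fs
  refine Measurable.ite ?_ hF measurable_const
  exact (measurableSet_le measurable_const hF).inter (measurableSet_lt hF measurable_const)

lemma Fs_nonneg {F : Circle1 → ℝ} (hF : ∀ x, 0 ≤ F x) (s : ℕ) (x : Circle1) : 0 ≤ Fs F s x := by
  unfold Fs
  split_ifs
  · exact hF x
  · rfl

lemma Fs_le (F : Circle1 → ℝ) (s : ℕ) (x : Circle1) : Fs F s x ≤ aa (s + 1) := by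
  unfold Fs
  split_ifs with h
  · exact h.2.le
  · exact (aa_pos _).le

lemma exists_layer (y : ℝ) (hy : aa 0 ≤ y) : ∃ s, aa s ≤ y ∧ y < aa (s + 1) := by
  have hex : ∃ s, y < aa s := by
    obtain ⟨n, hn⟩ := exists_nat_gt y
    exact ⟨n, hn.trans ((nat_le_tt n).trans_le (tt_le_aa n))⟩
  classical
  have h1 := Nat.find_spec hex
  have h0 : Nat.find hex ≠ 0 := by
    intro h
    rw [h] at h1
    linarith
  obtain ⟨m, hm⟩ := Nat.exists_eq_succ_of_ne_zero h0
  refine ⟨m, ?_, ?_⟩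
  · have := Nat.find_min hex (m := m) (by omega)
    linarith
  · rw [hm] at h1; exact h1

lemma F_le_layers (F : Circle1 → ℝ) (x : Circle1) :
    ENNReal.ofReal (F x) ≤ ENNReal.ofReal (aa 0) + ∑' s, ENNReal.ofReal (Fs F s x) := by
  by_cases h : F x < aa 0
  · exact (ENNReal.ofReal_le_ofReal h.le).trans le_self_add
  · obtain ⟨s, hs⟩ := exists_layer (F x) (not_lt.1 h)
    have : F x = Fs F s x := by unfold Fs; rw [if_pos hs]
    calc ENNReal.ofReal (F x) = ENNReal.ofReal (Fs F s x) := by rw [← this]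
      _ ≤ ∑' s, ENNReal.ofReal (Fs F s x) := ENNReal.le_tsum s
      _ ≤ _ := le_add_self

lemma theta_sum : ∑' s, ENNReal.ofReal (Real.exp (tt s) / aa s) ≤ 1 := by
  have h : ∀ s, ENNReal.ofReal (Real.exp (tt s) / aa s) ≤ (2⁻¹ : ENNReal) ^ (s + 1) := by
    intro s
    have h1 : Real.exp (tt s) / aa s ≤ (2⁻¹ : ℝ) ^ (s + 1) := by
      have h2 : aa s ≥ Real.exp (tt s) * Real.exp (tt s) := by
        rw [← Real.exp_add]
        unfold aa
        apply Real.exp_le_exp.2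
        have := Real.add_one_le_exp (2 * tt s)
        linarith
      have h3 : (2 : ℝ) ^ (s + 1) ≤ Real.exp (tt s) := by
        have := Real.add_one_le_exp (tt s)
        have h4 : tt s = 2 * 2 ^ (s + 1) := by unfold tt; ring
        have : (0 : ℝ) < 2 ^ (s + 1) := by positivity
        linarith
      rw [inv_pow, div_le_iff₀ (aa_pos s), ← div_eq_inv_mul, le_div_iff₀ (by positivity)]
      have := Real.exp_pos (tt s)
      nlinarith
    calc _ ≤ ENNReal.ofReal ((2⁻¹ : ℝ) ^ (s + 1)) := ENNReal.ofReal_le_ofReal h1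
      _ = _ := by
        rw [ENNReal.ofReal_pow (by norm_num), ENNReal.ofReal_inv_of_pos (by norm_num)]
        norm_num
  calc _ ≤ ∑' s : ℕ, (2⁻¹ : ENNReal) ^ (s + 1) := ENNReal.tsum_le_tsum h
    _ = 1 := by
      simp_rw [pow_succ]
      rw [ENNReal.tsum_mul_right, ENNReal.tsum_geometric, ENNReal.one_sub_inv_two, inv_inv]
      exact ENNReal.mul_inv_cancel (by norm_num) (by norm_num)

lemma scalar_phi (s : ℕ) (y : ℝ) (h1 : aa s ≤ y) (h2 : y < aa (s + 1)) :
    Real.exp (tt s) * y + 2 / tt s * (y * Real.log (1 + aa s * y)) ≤ PhiE (35 * y) := by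
  set t := tt s with ht
  have ht4 : 4 ≤ t := tt_four s
  have ht0 : 0 < t := by linarith
  have hy0 : 0 < y := (aa_pos s).trans_le h1
  have hbig : 1 + 2 * t + 35 ≤ Real.exp (2 * t) := by
    have h3 : Real.exp (2 * t) = Real.exp t * Real.exp t := by rw [← Real.exp_add]; ring_nf
    have h5 : t + 1 ≤ Real.exp t := Real.add_one_le_exp t
    have h4 : (2 : ℝ) ^ 4 ≤ Real.exp t := by
      calc (2 : ℝ) ^ 4 ≤ (Real.exp 1) ^ 4 := by
            gcongr
            have := Real.add_one_le_exp (1 : ℝ)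
            linarith
        _ = Real.exp 4 := by rw [← Real.exp_nat_mul]; norm_num
        _ ≤ _ := Real.exp_le_exp.2 ht4
    nlinarith
  have hy36 : 38 ≤ y := by
    have := Real.add_one_le_exp (Real.exp (2 * t))
    have h3 : aa s = Real.exp (Real.exp (2 * t)) := rfl
    linarith
  set u := Real.log y with hu
  have hu1 : Real.exp (2 * t) ≤ u := by
    rw [hu, Real.le_log_iff_exp_le hy0]
    exact h1
  have hu2 : u ≤ Real.exp (4 * t) := by
    rw [hu, Real.log_le_iff_le_exp hy0]
    have : aa (s + 1) = Real.exp (Real.exp (4 * t)) := by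
      unfold aa
      rw [tt_succ, ← ht]
      ring_nf
    rw [← this]
    exact h2.le
  have hu0 : 1 ≤ u := by linarith
  have e1 : Real.exp t ≤ u / t := by
    rw [le_div_iff₀ ht0]
    have h3 : Real.exp (2 * t) = Real.exp t * Real.exp t := by rw [← Real.exp_add]; ring_nf
    have h5 : t + 1 ≤ Real.exp t := Real.add_one_le_exp t
    nlinarith
  have e2 : Real.log (1 + aa s * y) ≤ 3 * u := by
    have : 3 * u = Real.log (y ^ 3) := by rw [Real.log_pow]; norm_num [hu]
    rw [this]
    apply Real.log_le_log
    · have := aa_pos s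
      positivity
    · have : aa s * y ≤ y * y := by gcongr
      nlinarith [mul_pos hy0 hy0]
  have l1 : Real.exp (tt s) * y + 2 / t * (y * Real.log (1 + aa s * y)) ≤ 7 * (y * u) / t := by
    have a1 : Real.exp t * y ≤ u / t * y := by gcongr
    have a2 : 2 / t * (y * Real.log (1 + aa s * y)) ≤ 2 / t * (y * (3 * u)) := by gcongr
    have a3 : u / t * y + 2 / t * (y * (3 * u)) = 7 * (y * u) / t := by ring
    linarith
  refine l1.trans ?_
  have f1 : u ≤ Real.log (1 + 35 * y) := Real.log_le_log hy0 (by linarith)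
  have f2 : Real.log (3 + 35 * y) ≤ 2 * u := by
    have : 2 * u = Real.log (y ^ 2) := by rw [Real.log_pow]; norm_num [hu]
    rw [this]
    apply Real.log_le_log (by positivity)
    nlinarith
  have f3 : Real.exp 1 ≤ Real.log (3 + 35 * y) := by
    have : u ≤ Real.log (3 + 35 * y) := Real.log_le_log hy0 (by linarith)
    have := Real.exp_one_lt_d9
    linarith
  have f3' : 0 < Real.log (3 + 35 * y) := (Real.exp_pos 1).trans_le f3
  have f4 : 1 ≤ Real.log (Real.log (3 + 35 * y)) := by
    rw [Real.le_log_iff_exp_le f3']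
    exact f3
  have f5 : Real.log (Real.log (3 + 35 * y)) ≤ 5 * t := by
    rw [Real.log_le_iff_le_exp f3']
    have h6 : Real.exp (5 * t) = Real.exp t * Real.exp (4 * t) := by
      rw [← Real.exp_add]; ring_nf
    rw [h6]
    have h5 : t + 1 ≤ Real.exp t := Real.add_one_le_exp t
    have := Real.exp_pos (4 * t)
    nlinarith
  unfold PhiE
  rw [div_le_div_iff₀ ht0 (by linarith)]
  have g1 : 7 * (y * u) * Real.log (Real.log (3 + 35 * y)) ≤ 7 * (y * u) * (5 * t) := by gcongr
  have g2 : 35 * y * u * t ≤ 35 * y * Real.log (1 + 35 * y) * t := by gcongr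
  linarith

lemma layers_phi (F : Circle1 → ℝ) (x : Circle1) :
    ∑' s, (ENNReal.ofReal (Real.exp (tt s)) * ENNReal.ofReal (Fs F s x) +
      ENNReal.ofReal (2 / tt s * (Fs F s x * Real.log (1 + aa s * Fs F s x)))) ≤
      ENNReal.ofReal (PhiE (35 * F x)) := by
  by_cases h : ∃ s, aa s ≤ F x ∧ F x < aa (s + 1)
  · obtain ⟨s, hs⟩ := h
    rw [tsum_eq_single s]
    · have e : Fs F s x = F x := by unfold Fs; rw [if_pos hs]
      have hF : 0 < F x := (aa_pos s).trans_le hs.1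
      have ht : 0 < tt s := by have := tt_four s; linarith
      rw [e, ← ENNReal.ofReal_mul (Real.exp_pos _).le, ← ENNReal.ofReal_add]
      · exact ENNReal.ofReal_le_ofReal (scalar_phi s _ hs.1 hs.2)
      · positivity
      · have := aa_pos s
        have : 0 ≤ Real.log (1 + aa s * F x) := Real.log_nonneg (by nlinarith [mul_pos this hF])
        positivity
    · intro s' hs'
      have : Fs F s' x = 0 := by
        unfold Fs
        rw [if_neg]
        rintro ⟨h1, h2⟩
        rcases lt_or_gt_of_ne hs' with h | h
        · have := aa_mono (show s' + 1 ≤ s from h)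
          linarith [hs.1]
        · have := aa_mono (show s + 1 ≤ s' from h)
          linarith [hs.2]
      simp [this]
  · have : ∀ s, Fs F s x = 0 := by
      intro s
      unfold Fs
      rw [if_neg]
      intro h'
      exact h ⟨s, h'⟩
    simp [this]

lemma main_bound (F : Circle1 → ℝ) (hF : Measurable F) (h0 : ∀ x, 0 ≤ F x) :
    volume {x : Circle1 | ∃ n ∈ Eset, ENNReal.ofReal (aa 0) + 3 <
      Av n (fun y => ENNReal.ofReal (F y)) x} ≤ ∫⁻ x, ENNReal.ofReal (PhiE (35 * F x)) := by
  set G : ℕ → Circle1 → ENNReal := fun j y =>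
    ∑' s, ENNReal.ofReal (bb (aa s) (tt s) (Fs F s) j y) with hG
  set H : Circle1 → ENNReal := fun y =>
    ∑' s, ENNReal.ofReal (Real.exp (tt s)) * ENNReal.ofReal (Fs F s y) with hH
  have hbm : ∀ s j, Measurable fun y => ENNReal.ofReal (bb (aa s) (tt s) (Fs F s) j y) :=
    fun s j => (bb_meas _ _ (Fs_meas hF s) j).ennreal_ofReal
  have hFm : ∀ s, Measurable fun y => ENNReal.ofReal (Fs F s y) :=
    fun s => (Fs_meas hF s).ennreal_ofReal
  have hGm : ∀ j, Measurable (G j) := fun j => Measurable.tsum fun s => hbm s j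
  have hHm : Measurable H := Measurable.tsum fun s => (hFm s).const_mul _
  have hsub : {x : Circle1 | ∃ n ∈ Eset, ENNReal.ofReal (aa 0) + 3 <
      Av n (fun y => ENNReal.ofReal (F y)) x} ⊆
      (⋃ j, {x | ∃ k, 1 < Av (PP j k) (G j) x}) ∪ {x | ∃ k, 1 < Av (NN k) H x} := by
    rintro x ⟨n, ⟨k, -, j, hjk, rfl⟩, hx⟩
    by_contra hcon
    simp only [Set.mem_union, Set.mem_iUnion, Set.mem_ofPred_eq, not_or, not_exists, not_lt]
      at hcon
    obtain ⟨c1, c2⟩ := hcon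
    rw [← PP_mul_NN' j k hjk] at hx
    have hb : ∀ s y, Av (NN j) (fun y => ENNReal.ofReal (Fs F s y)) y ≤
        ENNReal.ofReal (bb (aa s) (tt s) (Fs F s) j y) +
        (Av (NN (j + 1)) (fun y => ENNReal.ofReal (Real.exp (tt s)) * ENNReal.ofReal (Fs F s y)) y +
          ENNReal.ofReal (Real.exp (tt s) / aa s)) := by
      intro s y
      rw [Av_const_mul, Av_ofReal (NN_ne _) _ (Fs_nonneg h0 s),
        Av_ofReal (NN_ne _) _ (Fs_nonneg h0 s)]
      change ENNReal.ofReal (gg (Fs F s) j y) ≤ _ + (_ * ENNReal.ofReal (gg (Fs F s) (j + 1) y) + _)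
      have g0 := gg_nonneg (Fs_nonneg h0 s) j y
      have g1 := gg_nonneg (Fs_nonneg h0 s) (j + 1) y
      have b0 := bb_nonneg (aa s) (tt s) (Fs_nonneg h0 s) j y
      have ap := aa_pos s
      rw [← ENNReal.ofReal_mul (Real.exp_pos _).le, ← ENNReal.ofReal_add (by positivity)
        (by positivity), ← ENNReal.ofReal_add b0 (by positivity)]
      apply ENNReal.ofReal_le_ofReal
      have p1 : 0 ≤ Real.exp (tt s) * gg (Fs F s) (j + 1) y := by positivity
      have p2 : 0 ≤ Real.exp (tt s) / aa s := by positivity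
      unfold bb
      split_ifs with h
      · linarith
      · rw [not_and_or, not_lt, not_lt] at h
        rcases h with h | h <;> linarith
    have hstep : ∀ y, Av (NN j) (fun y => ENNReal.ofReal (F y)) y ≤
        ENNReal.ofReal (aa 0) + (G j y + (Av (NN (j + 1)) H y + 1)) := by
      intro y
      calc _ ≤ Av (NN j) (fun y => ENNReal.ofReal (aa 0) + ∑' s, ENNReal.ofReal (Fs F s y)) y :=
            Av_mono (F_le_layers F) y
        _ = ENNReal.ofReal (aa 0) + ∑' s, Av (NN j) (fun y => ENNReal.ofReal (Fs F s y)) y := by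
            rw [Av_add, Av_const (NN_ne _), Av_tsum]
        _ ≤ _ := by
            gcongr
            refine (ENNReal.tsum_le_tsum fun s => hb s y).trans ?_
            rw [ENNReal.tsum_add, ENNReal.tsum_add, hH, Av_tsum]
            gcongr
            exact theta_sum
    have hfin : Av (PP j k * NN j) (fun y => ENNReal.ofReal (F y)) x ≤
        ENNReal.ofReal (aa 0) + 3 := by
      rw [← Av_comp (PP_ne _ _) (NN_ne _) (cop2 j k j (by omega))]
      refine (Av_mono hstep x).trans ?_
      rw [Av_add, Av_add, Av_add, Av_const (PP_ne _ _), Av_const (PP_ne _ _),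
        Av_comp (PP_ne _ _) (NN_ne _) (cop2 j k (j + 1) le_rfl), PP_mul_NN j k hjk]
      have := add_le_add (c1 j k) (add_le_add (c2 k) (le_refl (1 : ENNReal)))
      gcongr
      exact this.trans (by norm_num)
    exact absurd hx (not_lt.2 hfin)
  calc _ ≤ _ := measure_mono hsub
    _ ≤ volume (⋃ j, {x | ∃ k, 1 < Av (PP j k) (G j) x}) +
        volume {x | ∃ k, 1 < Av (NN k) H x} := measure_union_le _ _
    _ ≤ (∑' j, ∫⁻ x, G j x) + ∫⁻ x, H x := by
        gcongr
        · refine (measure_iUnion_le _).trans (ENNReal.tsum_le_tsum fun j => ?_)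
          exact max_chain (PP j) (PP_ne j) (PP_dvd j) (G j) (hGm j)
        · exact max_chain NN NN_ne NN_dvd H hHm
    _ ≤ (∑' s, ∫⁻ x, ENNReal.ofReal (2 / tt s * (Fs F s x * Real.log (1 + aa s * Fs F s x)))) +
        ∫⁻ x, H x := by
        refine add_le_add ?_ le_rfl
        have eG : ∀ j, ∫⁻ x, G j x =
            ∑' s, ∫⁻ x, ENNReal.ofReal (bb (aa s) (tt s) (Fs F s) j x) :=
          fun j => lintegral_tsum fun s => (hbm s j).aemeasurable
        rw [tsum_congr eG, ENNReal.tsum_comm]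
        exact ENNReal.tsum_le_tsum fun s => layer_lint _ _ (aa_pos s) (tt_four s) (Fs_meas hF s)
          (Fs_nonneg h0 s) (Fs_le F s)
    _ = ∫⁻ x, ∑' s, (ENNReal.ofReal (Real.exp (tt s)) * ENNReal.ofReal (Fs F s x) +
      ENNReal.ofReal (2 / tt s * (Fs F s x * Real.log (1 + aa s * Fs F s x)))) := by
        simp_rw [ENNReal.tsum_add]
        rw [lintegral_add_left hHm, add_comm]
        congr 1
        rw [lintegral_tsum]
        intro s
        have := Fs_meas hF s
        apply Measurable.aemeasurable
        fun_prop
    _ ≤ _ := lintegral_mono fun x => layers_phi F x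

/-- **Weak type maximal inequality for the set `E` (Theorem 2, inequality).** There is an
absolute constant `c > 0` such that for every `f ∈ L^Φ(𝕋)` and `λ > 0`,
`|{x : sup_{n∈E} |R_n f(x)| > λ}| ≤ ∫_𝕋 Φ(c|f|/λ)`. -/
theorem riemann_maximal_weak_type_Eset :
    ∃ c : ℝ, 0 < c ∧
      ∀ f : Circle1 → ℝ, Measurable f →
        (∫⁻ x, ENNReal.ofReal (PhiE |f x|)) < ⊤ →
        ∀ lam : ℝ, 0 < lam →
          volume {x : Circle1 | ∃ n ∈ Eset, lam < |RiemannSum n f x|} ≤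
            ∫⁻ t, ENNReal.ofReal (PhiE (c * |f t| / lam)) := by
  set K : ℝ := aa 0 + 3 with hK
  have hK0 : 0 < K := by have := aa_pos 0; linarith
  refine ⟨35 * K, by positivity, ?_⟩
  intro f hf _ lam hlam
  have h := main_bound (fun x => K * |f x| / lam) (by fun_prop) (fun x => by positivity)
  have e : ∀ t, 35 * (K * |f t| / lam) = 35 * K * |f t| / lam := fun t => by ring
  simp only [e] at h
  refine le_trans (measure_mono ?_) h
  rintro x ⟨n, hn, hx⟩
  refine ⟨n, hn, ?_⟩
  have hn0 : n ≠ 0 := by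
    obtain ⟨k, -, j, -, rfl⟩ := hn
    exact prodPrime_ne _
  have h1 : lam < RiemannSum n (fun y => |f y|) x := hx.trans_le (RS_abs_le n f x)
  have h2 : RiemannSum n (fun x => K * |f x| / lam) x
      = K / lam * RiemannSum n (fun y => |f y|) x := by
    rw [← RS_mul_inv (φ := fun _ => K / lam) (fun _ _ => rfl)]
    congr 1
    ext y
    ring
  rw [Av_ofReal hn0 _ (fun x => by positivity), h2]
  have h3 : ENNReal.ofReal (aa 0) + 3 = ENNReal.ofReal K := by
    rw [hK, ENNReal.ofReal_add (aa_pos 0).le (by norm_num)]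
    norm_num
  rw [h3, ENNReal.ofReal_lt_ofReal_iff_of_nonneg hK0.le]
  calc K = K / lam * lam := by field_simp
    _ < _ := by gcongr
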